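/- arXiv:math/0701925 — 2 statements merged into one kernel-verified Lean document; each statement's English description precedes it below -/
import Mathlib

section
/- Let Γ be a group generated by d elements and let N = ℤΓ be the regular module. If N₀ ≤ N is a ℤΓ-submodule of finite index b, then N₀ can be generated as a ℤΓ-module by at most 1 + (2d+1)·log₂(b) elements. -/
/-!
Let `R` be a principal ideal domain (`ℤ` for the theorem), let the `R`-algebra `A` be generated by
`G`, the `A`-module `M` by `X`, and let `N ≤ M`. Lift `R`-module generators of `M / N` to a finite
set `F ⊆ M`, put `K = ⟨F⟩`, and let `ε` send each `m ∈ M` to an element of `K` congruent to `m`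
modulo `N`. Let `L` be the `A`-span of the corrections `m - ε m` for `m ∈ X ∪ G • F`. Then `K + L`
contains `X` and is stable under `G`, so it is all of `M`, and since `L ≤ N` the modular law gives
`N = L + (K ⊓ N)`. As `R` is a principal ideal domain, `K ⊓ N` needs at most `|F|` generators.
Finally `M / N`, if finite of order `b`, needs at most `log₂ b` generators, because each generator
added outside the span of the previous ones at least doubles that span.
-/

open Submodule
open scoped Pointwise

lemma two_mul_natCard_le_of_lt {R M : Type*} [Ring R] [AddCommGroup M] [Module R M]
    {p q : Submodule R M} [Finite q] (h : p < q) : 2 * Nat.card p ≤ Nat.card q := by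
  have hlt : Nat.card p < Nat.card q :=
    Set.ncard_lt_ncard (SetLike.coe_ssubset_coe.2 h) (Set.toFinite _)
  obtain ⟨k, hk⟩ : Nat.card p ∣ Nat.card q :=
    AddSubgroup.card_dvd_of_le (toAddSubgroup_mono h.le)
  have hk_lt : 1 < k := lt_of_mul_lt_mul_left' (by rwa [mul_one, ← hk] : Nat.card p * 1 < _)
  calc 2 * Nat.card p ≤ k * Nat.card p := Nat.mul_le_mul_right _ hk_lt
    _ = Nat.card q := by rw [hk, mul_comm]

lemma two_pow_spanFinrank_top_le_natCard (R M : Type*) [Ring R] [AddCommGroup M] [Module R M]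
    [Finite M] : 2 ^ (⊤ : Submodule R M).spanFinrank ≤ Nat.card M := by
  classical
  obtain ⟨T, hT, hmax⟩ := (Set.toFinite {T : Finset M |
    2 ^ T.card ≤ Nat.card (span R (T : Set M))}).exists_maximal ⟨∅, by simp⟩
  have hspan : span R (T : Set M) = ⊤ := by
    by_contra hne
    obtain ⟨x, -, hx⟩ := SetLike.exists_of_lt (lt_top_iff_ne_top.2 hne)
    have hxT : x ∉ T := fun h ↦ hx (subset_span h)
    have hlt : span R (T : Set M) < span R (↑(insert x T) : Set M) :=
      SetLike.lt_iff_le_and_exists.2 ⟨span_mono (by simp), x, subset_span (by simp), hx⟩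
    have hinsert : 2 ^ (insert x T).card ≤ Nat.card (span R (↑(insert x T) : Set M)) :=
      calc 2 ^ (insert x T).card = 2 * 2 ^ T.card := by
            rw [Finset.card_insert_of_notMem hxT, pow_succ']
        _ ≤ 2 * Nat.card (span R (T : Set M)) := Nat.mul_le_mul_left 2 hT
        _ ≤ Nat.card (span R (↑(insert x T) : Set M)) := two_mul_natCard_le_of_lt hlt
    exact hxT (hmax hinsert (Finset.subset_insert x T) (Finset.mem_insert_self x T))
  calc 2 ^ (⊤ : Submodule R M).spanFinrank ≤ 2 ^ T.card := by
        rw [← hspan, ← Set.ncard_coe_finset]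
        exact Nat.pow_le_pow_right two_pos (spanFinrank_span_le_ncard_of_finite T.finite_toSet)
    _ ≤ Nat.card (span R (T : Set M)) := hT
    _ = Nat.card M := by rw [hspan]; exact Nat.card_congr topEquiv.toEquiv

lemma exists_finset_span_eq_of_le_span {R M : Type*} [CommRing R] [IsDomain R]
    [IsPrincipalIdealRing R] [AddCommGroup M] [Module R M] {P : Submodule R M} {F : Finset M}
    (hP : P ≤ span R (F : Set M)) :
    ∃ B : Finset M, span R (B : Set M) = P ∧ B.card ≤ F.card := by
  let φ : (F → R) →ₗ[R] M := Fintype.linearCombination R (fun x : F ↦ (x : M))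
  have hφ : LinearMap.range φ = span R (F : Set M) := by simp [φ, Fintype.range_linearCombination]
  have hPφ : (P.comap φ).map φ = P := map_comap_eq_self (hP.trans_eq hφ.symm)
  have hfg : (P.comap φ).FG := IsNoetherian.noetherian _
  obtain ⟨B, hBcard, hB⟩ := (hPφ ▸ hfg.map φ).exists_span_finset_card_eq_spanFinrank
  refine ⟨B, hB, ?_⟩
  calc B.card = ((P.comap φ).map φ).spanFinrank := by rw [hBcard, hPφ]
    _ ≤ (P.comap φ).spanFinrank := spanFinrank_map_le_of_fg φ hfg
    _ = Module.finrank R (P.comap φ) := by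
      rw [Module.finrank_eq_spanFinrank_of_free, spanFinrank_top]
    _ ≤ Module.finrank R (F → R) := finrank_le _
    _ = F.card := by simp

lemma exists_finset_span_sup_ker_eq_top {R M Q : Type*} [Ring R] [AddCommGroup M] [Module R M]
    [AddCommGroup Q] [Module R Q] [Module.Finite R Q] {f : M →ₗ[R] Q}
    (hf : Function.Surjective f) :
    ∃ F : Finset M, F.card = (⊤ : Submodule R Q).spanFinrank ∧
      span R (F : Set M) ⊔ LinearMap.ker f = ⊤ := by
  classical
  obtain ⟨T, hTcard, hT⟩ :=
    (Module.Finite.fg_top (R := R) (M := Q)).exists_span_finset_card_eq_spanFinrank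
  refine ⟨T.image (Function.surjInv hf),
    (Finset.card_image_of_injective _ (Function.injective_surjInv hf)).trans hTcard, ?_⟩
  rw [← LinearMap.map_eq_top_iff (LinearMap.range_eq_top.2 hf), map_span, Finset.coe_image,
    ← Set.image_comp, (Function.rightInverse_surjInv hf).comp_eq_id, Set.image_id, hT]

section StableSubmodules

variable {R A M : Type*} [CommSemiring R] [Semiring A] [Algebra R A] [AddCommMonoid M]
  [Module R M] [Module A M] [IsScalarTower R A M]

lemma smul_mem_of_mem_adjoin {G : Set A} {P : Submodule R M}
    (hP : ∀ g ∈ G, ∀ x ∈ P, g • x ∈ P) {a : A} (ha : a ∈ Algebra.adjoin R G) {x : M}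
    (hx : x ∈ P) : a • x ∈ P := by
  induction ha using Algebra.adjoin_induction generalizing x with
  | mem g hg => exact hP g hg x hx
  | algebraMap r => simpa only [algebraMap_smul] using P.smul_mem r hx
  | add a b _ _ iha ihb => simpa only [add_smul] using P.add_mem (iha hx) (ihb hx)
  | mul a b _ _ iha ihb => simpa only [mul_smul] using iha (ihb hx)

lemma eq_top_of_smul_mem {G : Set A} (hG : Algebra.adjoin R G = ⊤) {X : Set M}
    (hX : span A X = ⊤) {P : Submodule R M} (hXP : X ⊆ P)
    (hP : ∀ g ∈ G, ∀ x ∈ P, g • x ∈ P) : P = ⊤ := by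
  refine eq_top_iff.2 fun m _ ↦ ?_
  have hm : m ∈ span A X := hX ▸ mem_top
  induction hm using span_induction with
  | mem x hx => exact hXP hx
  | zero => exact P.zero_mem
  | add x y _ _ hx hy => exact P.add_mem (hx trivial) (hy trivial)
  | smul a x _ hx => exact smul_mem_of_mem_adjoin hP (hG ▸ Algebra.mem_top) (hx trivial)

end StableSubmodules

section Generators

variable {R A M : Type*} [CommRing R] [Ring A] [Algebra R A] [AddCommGroup M]
  [Module R M] [Module A M] [IsScalarTower R A M]

lemma span_sup_span_sub_eq_top {G : Set A} (hG : Algebra.adjoin R G = ⊤) {X : Set M}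
    (hX : span A X = ⊤) {F : Set M} {ε : M → M} (hε : ∀ m, ε m ∈ span R F) :
    span R F ⊔ (span A ((fun m ↦ m - ε m) '' (X ∪ G • F))).restrictScalars R = ⊤ := by
  set L := span A ((fun m ↦ m - ε m) '' (X ∪ G • F))
  have hmem : X ∪ G • F ⊆ (span R F ⊔ L.restrictScalars R : Submodule R M) := by
    intro m hm
    rw [← add_sub_cancel (ε m) m]
    exact add_mem_sup (hε m) (subset_span (Set.mem_image_of_mem _ hm))
  refine eq_top_of_smul_mem hG hX (Set.subset_union_left.trans hmem) fun g hg x hx ↦ ?_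
  obtain ⟨k, hk, l, hl, rfl⟩ := mem_sup.1 hx
  rw [smul_add]
  refine add_mem ?_ (mem_sup_right (L.smul_mem g hl))
  have hF : span R F ≤ (span R F ⊔ L.restrictScalars R).comap (Algebra.lsmul R R M g) :=
    span_le.2 fun f hf ↦ hmem (Or.inr (Set.smul_mem_smul hg hf))
  exact hF hk

lemma span_union_eq_of_span_eq_inf {G : Set A} (hG : Algebra.adjoin R G = ⊤) {X : Set M}
    (hX : span A X = ⊤) {N : Submodule A M} {F B : Set M} {ε : M → M}
    (hε : ∀ m, ε m ∈ span R F) (hεN : ∀ m, m - ε m ∈ N)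
    (hB : span R B = span R F ⊓ N.restrictScalars R) :
    span A ((fun m ↦ m - ε m) '' (X ∪ G • F) ∪ B) = N := by
  rw [span_union]
  set L := span A ((fun m ↦ m - ε m) '' (X ∪ G • F))
  have hLN : L ≤ N := span_le.2 (Set.image_subset_iff.2 fun m _ ↦ hεN m)
  have hBN : span A B ≤ N := span_le.2 fun x hx ↦ (hB.le (subset_span hx)).2
  have hsup : N.restrictScalars R = L.restrictScalars R ⊔ span R B := by
    rw [hB, ← sup_inf_assoc_of_le _ ((restrictScalars_le R).2 hLN), sup_comm _ (span R F),
      span_sup_span_sub_eq_top hG hX hε, top_inf_eq]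
  refine le_antisymm (sup_le hLN hBN) ?_
  rw [← restrictScalars_le R, hsup]
  exact sup_le ((restrictScalars_le R).2 le_sup_left)
    ((span_le_restrictScalars R A B).trans ((restrictScalars_le R).2 le_sup_right))

theorem exists_finset_span_eq_card_le_add_mul_spanFinrank [IsDomain R] [IsPrincipalIdealRing R]
    {G : Finset A} (hG : Algebra.adjoin R (G : Set A) = ⊤)
    {X : Finset M} (hX : span A (X : Set M) = ⊤) (N : Submodule A M) [Module.Finite R (M ⧸ N)] :
    ∃ T : Finset M, span A (T : Set M) = N ∧
      T.card ≤ X.card + (G.card + 1) * (⊤ : Submodule R (M ⧸ N)).spanFinrank := by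
  classical
  obtain ⟨F, hFcard, hF⟩ := exists_finset_span_sup_ker_eq_top
    (f := N.mkQ.restrictScalars R) N.mkQ_surjective
  rw [LinearMap.ker_restrictScalars, ker_mkQ] at hF
  have hdecomp (m : M) : ∃ e ∈ span R (F : Set M), m - e ∈ N := by
    obtain ⟨e, he, n, hn, rfl⟩ := mem_sup.1 (hF ▸ mem_top : m ∈ _)
    exact ⟨e, he, by simpa using hn⟩
  choose ε hε hεN using hdecomp
  obtain ⟨B, hB, hBcard⟩ := exists_finset_span_eq_of_le_span
    (inf_le_left : span R (F : Set M) ⊓ N.restrictScalars R ≤ _)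
  refine ⟨(X ∪ G • F).image (fun m ↦ m - ε m) ∪ B, ?_, ?_⟩
  · simpa using span_union_eq_of_span_eq_inf hG hX hε hεN hB
  · calc ((X ∪ G • F).image (fun m ↦ m - ε m) ∪ B).card
        ≤ ((X ∪ G • F).image (fun m ↦ m - ε m)).card + B.card := Finset.card_union_le _ _
      _ ≤ (X ∪ G • F).card + F.card := add_le_add Finset.card_image_le hBcard
      _ ≤ X.card + G.card * F.card + F.card := by
        grw [Finset.card_union_le, Finset.card_smul_le]
      _ = X.card + (G.card + 1) * (⊤ : Submodule R (M ⧸ N)).spanFinrank := by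
        rw [hFcard]; ring

theorem exists_finset_span_eq_card_le_add_mul_logb [IsDomain R] [IsPrincipalIdealRing R]
    {G : Finset A} (hG : Algebra.adjoin R (G : Set A) = ⊤)
    {X : Finset M} (hX : span A (X : Set M) = ⊤) (N : Submodule A M) [Finite (M ⧸ N)] :
    ∃ T : Finset M, span A (T : Set M) = N ∧
      (T.card : ℝ) ≤ X.card + (G.card + 1) * Real.logb 2 (Nat.card (M ⧸ N)) := by
  obtain ⟨T, hT, hTcard⟩ := exists_finset_span_eq_card_le_add_mul_spanFinrank hG hX N
  have hlog : ((⊤ : Submodule R (M ⧸ N)).spanFinrank : ℝ) ≤ Real.logb 2 (Nat.card (M ⧸ N)) :=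
    (Nat.cast_le.2 (Nat.le_log_of_pow_le one_lt_two
      (two_pow_spanFinrank_top_le_natCard R (M ⧸ N)))).trans (Real.natLog_le_logb _ 2)
  refine ⟨T, hT, ?_⟩
  grw [← hlog]
  exact_mod_cast hTcard

end Generators

section GroupRings

variable (R : Type*) [CommSemiring R]

lemma adjoin_of_image_eq_top {Γ : Type*} [Monoid Γ] {S : Set Γ} (hS : Submonoid.closure S = ⊤) :
    Algebra.adjoin R (MonoidAlgebra.of R Γ '' S) = ⊤ := by
  rw [Set.image_eq_range, Algebra.adjoin_range_eq_range_freeAlgebra_lift, AlgHom.range_eq_top]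
  exact MonoidAlgebra.freeAlgebra_lift_of_surjective_of_closure hS

lemma exists_finset_adjoin_eq_top_card_le {Γ : Type*} [Group Γ] {S : Finset Γ}
    (hS : Subgroup.closure (S : Set Γ) = ⊤) :
    ∃ G : Finset (MonoidAlgebra R Γ),
      Algebra.adjoin R (G : Set (MonoidAlgebra R Γ)) = ⊤ ∧ G.card ≤ 2 * S.card := by
  classical
  have hclosure : Submonoid.closure ((S ∪ S⁻¹ : Finset Γ) : Set Γ) = ⊤ := by
    rw [Finset.coe_union, Finset.coe_inv, ← Subgroup.closure_toSubmonoid, hS,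
      Subgroup.top_toSubmonoid]
  refine ⟨(S ∪ S⁻¹).image (MonoidAlgebra.of R Γ), ?_, ?_⟩
  · rw [Finset.coe_image]
    exact adjoin_of_image_eq_top R hclosure
  · calc ((S ∪ S⁻¹).image (MonoidAlgebra.of R Γ)).card
        ≤ (S ∪ S⁻¹).card := Finset.card_image_le
      _ ≤ S.card + S⁻¹.card := Finset.card_union_le _ _
      _ = 2 * S.card := by rw [Finset.card_inv, two_mul]

end GroupRings

theorem principal_submodule_generation_bound_general {R Γ M : Type*} [CommRing R] [IsDomain R]
    [IsPrincipalIdealRing R] [Group Γ] [AddCommGroup M] [Module R M] [Module (MonoidAlgebra R Γ) M]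
    [IsScalarTower R (MonoidAlgebra R Γ) M] {S : Finset Γ}
    (hS : Subgroup.closure (S : Set Γ) = ⊤) {X : Finset M}
    (hX : span (MonoidAlgebra R Γ) (X : Set M) = ⊤) (N : Submodule (MonoidAlgebra R Γ) M)
    [Finite (M ⧸ N)] :
    ∃ T : Finset M, span (MonoidAlgebra R Γ) (T : Set M) = N ∧
      (T.card : ℝ) ≤ X.card + (2 * S.card + 1) * Real.logb 2 (Nat.card (M ⧸ N)) := by
  obtain ⟨G, hG, hGcard⟩ := exists_finset_adjoin_eq_top_card_le R hS
  obtain ⟨T, hT, hTcard⟩ := exists_finset_span_eq_card_le_add_mul_logb hG hX N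
  have hlog : 0 ≤ Real.logb 2 (Nat.card (M ⧸ N)) :=
    Real.logb_nonneg one_lt_two (Nat.one_le_cast.2 Nat.card_pos)
  refine ⟨T, hT, hTcard.trans ?_⟩
  gcongr
  exact_mod_cast hGcard

/-- Let `Γ` be a group generated by `d` elements and `N = ℤΓ` the regular module.
If `N₀ ≤ ℤΓ` is a submodule of finite (additive) index `b`, then `N₀` is generated
as a `ℤΓ`-module by at most `1 + (2d+1)·log₂ b` elements. -/
theorem principal_submodule_generation_bound {Γ : Type*} [Group Γ] (dn : ℕ)
    (hΓ : ∃ S : Finset Γ, S.card = dn ∧ Subgroup.closure (S : Set Γ) = ⊤)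
    (N₀ : Submodule (MonoidAlgebra ℤ Γ) (MonoidAlgebra ℤ Γ)) (b : ℕ) (hb : 0 < b)
    (hidx : Nat.card (MonoidAlgebra ℤ Γ ⧸ N₀) = b) :
    ∃ T₀ : Finset (MonoidAlgebra ℤ Γ),
      Submodule.span (MonoidAlgebra ℤ Γ) (T₀ : Set (MonoidAlgebra ℤ Γ)) = N₀ ∧
      (T₀.card : ℝ) ≤ 1 + (2 * dn + 1) * Real.logb 2 b := by
  obtain ⟨S, rfl, hS⟩ := hΓ
  subst hidx
  have := Nat.finite_of_card_ne_zero hb.ne'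
  simpa using principal_submodule_generation_bound_general hS (X := {1}) (by simp) N₀
end

section
/- Let G₁ and G₂ be finitely generated groups, Γ = G₁ * G₂ their free product, and N a normal subgroup of finite index n in Γ. Let N₁ = N ∩ G₁, N₂ = N ∩ G₂, k₁ = [G₁ : N₁], k₂ = [G₂ : N₂]. Then (d(N)-1)/n = (d(N₁)-1)/k₁ + (d(N₂)-1)/k₂ + 1. -/
/-- `d G` is the minimal number of generators of the group `G`. -/
noncomputable def d (G : Type*) [Group G] : ℕ :=
  sInf {n | ∃ S : Finset G, S.card = n ∧ Subgroup.closure (S : Set G) = ⊤}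

/-!
The idea is to replace the rank of a subgroup of finite index by the rank of an action groupoid.
For `G` acting on a finite set `X`, let the rank of the action be the least number of arrows
generating its groupoid. Contracting a spanning tree in each orbit shows that it equals `|X|` plus
the sum of `d(stabilizer) - 1` over the orbits.

For `G₁ ∗ G₂` acting on `X` the rank is the sum of the ranks of the actions of `G₁` and `G₂`; only
`≥` needs an argument. Regard a generating set as a labelled graph on `X` and subdivide its edges
until every label lies in a factor: this adds as many edges as vertices. Then fold as Stallings
does: two vertices joined by a path of trivial label in one factor are identified, which removes a
vertex and an edge of that factor. In a graph without folds, paths of each factor are determined by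
that factor alone, as one sees from a permutation representation of `G₁ ∗ G₂` built from the two
groupoids. So the vertices have become the points of `X`, and the edges of each factor generate the
action of that factor.

For the action on `(G₁ ∗ G₂) ⧸ N` with `N` normal, all stabilizers equal `N`.
-/

open MulAction Multiset Monoid.Coprod

section MinimalGenerators

variable {G H : Type*} [Group G] [Group H]

theorem d_le_of_closure_eq (K : Subgroup G) (S : Multiset G)
    (hS : Subgroup.closure {x | x ∈ S} = K) : d K ≤ card S := by
  classical
  subst hS
  let T : Finset (Subgroup.closure {x | x ∈ S}) :=
    (S.attach.map fun x ↦ ⟨x.1, Subgroup.subset_closure x.2⟩).toFinset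
  have hT : (T : Set (Subgroup.closure {x | x ∈ S})) = (↑) ⁻¹' {x | x ∈ S} := by
    ext ⟨x, hx⟩
    simp [T]
  calc d (Subgroup.closure {x | x ∈ S})
      ≤ T.card := Nat.sInf_le ⟨T, rfl, by rw [hT, Subgroup.closure_closure_coe_preimage]⟩
    _ ≤ card S := (toFinset_card_le _).trans_eq (by simp)

theorem exists_finset_closure_eq_top_card_eq_d (G : Type*) [Group G] [hG : Group.FG G] :
    ∃ S : Finset G, S.card = d G ∧ Subgroup.closure (S : Set G) = ⊤ :=
  Nat.sInf_mem (s := {n | ∃ S : Finset G, S.card = n ∧ Subgroup.closure (S : Set G) = ⊤})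
    (let ⟨S, hS⟩ := hG.out; ⟨S.card, S, rfl, hS⟩)

theorem card_generators_subset_of_mulEquiv (e : G ≃* H) :
    {n | ∃ S : Finset G, S.card = n ∧ Subgroup.closure (S : Set G) = ⊤} ⊆
      {n | ∃ S : Finset H, S.card = n ∧ Subgroup.closure (S : Set H) = ⊤} := by
  rintro n ⟨S, hn, hS⟩
  refine ⟨S.map e.toEquiv.toEmbedding, by simpa using hn, ?_⟩
  have := e.toMonoidHom.map_closure S
  rw [hS, Subgroup.map_top_of_surjective _ e.surjective] at this
  simpa using this.symm

theorem d_congr (e : G ≃* H) : d G = d H :=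
  congrArg sInf <| (card_generators_subset_of_mulEquiv e).antisymm
    (card_generators_subset_of_mulEquiv e.symm)

end MinimalGenerators

/-- An edge of a directed graph on the vertex set `V`, labelled by an element of `G`. Multisets of
edges are used as finite graphs, so parallel edges count separately. -/
structure LabeledEdge (V G : Type*) where
  src : V
  tgt : V
  label : G

/-- `HasPath S x y g`: some path from `x` to `y` along edges of `S`, traversed in either direction,
has label `g`, the product of the labels of its edges. In other words, `g : x ⟶ y` belongs to the
groupoid generated by `S`. -/
inductive HasPath {V G : Type*} [Group G] (S : Multiset (LabeledEdge V G)) : V → V → G → Prop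
  | edge {e : LabeledEdge V G} (he : e ∈ S) : HasPath S e.src e.tgt e.label
  | refl (x : V) : HasPath S x x 1
  | trans {x y z : V} {g h : G} (hxy : HasPath S x y g) (hyz : HasPath S y z h) :
      HasPath S x z (g * h)
  | symm {x y : V} {g : G} (hxy : HasPath S x y g) : HasPath S y x g⁻¹

namespace LabeledEdge

variable {V W G K : Type*}

/-- The image of an edge under a map of vertices and a map of labels. -/
def map (f : V → W) (φ : G → K) (e : LabeledEdge V G) : LabeledEdge W K :=
  ⟨f e.src, f e.tgt, φ e.label⟩

@[simp]
theorem map_id_id : map (id : V → V) (id : G → G) = id :=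
  rfl

/-- Transport of an edge along `r : V → W`, where `τ x` is regarded as the label of a path from
`r x` to `x`. -/
def transport [Group G] (r : V → W) (τ : V → G) (e : LabeledEdge V G) : LabeledEdge W G :=
  ⟨r e.src, r e.tgt, τ e.src * e.label * (τ e.tgt)⁻¹⟩

end LabeledEdge

/-- The vertex group at `x` of the groupoid generated by `S`. -/
def vertexGroup {V G : Type*} [Group G] (S : Multiset (LabeledEdge V G)) (x : V) : Subgroup G where
  carrier := {g | HasPath S x x g}
  mul_mem' := .trans
  one_mem' := .refl x
  inv_mem' := .symm

namespace HasPath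

variable {V W G K : Type*} [Group G] [Group K] {S : Multiset (LabeledEdge V G)} {x y v w : V}
  {g : G}

theorem bind {T : Multiset (LabeledEdge W K)} (f : V → W) (φ : G →* K)
    (hST : ∀ e ∈ S, HasPath T (f e.src) (f e.tgt) (φ e.label)) (h : HasPath S x y g) :
    HasPath T (f x) (f y) (φ g) := by
  induction h with
  | edge he => exact hST _ he
  | refl x => simpa using refl (f x)
  | trans _ _ ihxy ihyz => simpa using ihxy.trans ihyz
  | symm _ ih => simpa using ih.symm

theorem mono {T : Multiset (LabeledEdge V G)} (hST : S ⊆ T) (h : HasPath S x y g) :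
    HasPath T x y g :=
  h.bind id (.id G) fun _ he ↦ edge (hST he)

theorem map (f : V → W) (φ : G →* K) (h : HasPath S x y g) :
    HasPath (S.map (LabeledEdge.map f φ)) (f x) (f y) (φ g) :=
  h.bind f φ fun _ he ↦ edge (mem_map_of_mem (LabeledEdge.map f φ) he)

theorem transport (r : V → W) (τ : V → G) (h : HasPath S x y g) :
    HasPath (S.map (LabeledEdge.transport r τ)) (r x) (r y) (τ x * g * (τ y)⁻¹) := by
  induction h with
  | edge he => exact edge (mem_map_of_mem (LabeledEdge.transport r τ) he)
  | refl x => simpa using refl (r x)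
  | trans _ _ ihxy ihyz => simpa [mul_assoc] using ihxy.trans ihyz
  | symm _ ih => simpa [mul_assoc] using ih.symm

theorem mem_closure_labels [DecidableEq V] (hloop : ∀ e ∈ S, e.src = e.tgt) (h : HasPath S x y g) :
    x = y ∧
      g ∈ Subgroup.closure {a | a ∈ (S.filter (x = LabeledEdge.src ·)).map LabeledEdge.label} := by
  induction h with
  | @edge e he => exact ⟨hloop e he, Subgroup.subset_closure <| by
      simpa using ⟨e, ⟨he, rfl⟩, rfl⟩⟩
  | refl x => exact ⟨rfl, one_mem _⟩
  | trans _ _ ihxy ihyz =>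
    obtain ⟨rfl, hg⟩ := ihxy
    exact ⟨ihyz.1, mul_mem hg ihyz.2⟩
  | symm _ ih =>
    obtain ⟨rfl, hg⟩ := ih
    exact ⟨rfl, inv_mem hg⟩

theorem exists_edge_incident (hvw : v ≠ w) (h : HasPath S v w g) :
    ∃ e ∈ S, e.src ≠ w ∧ e.tgt = w ∨ e.src = w ∧ e.tgt ≠ w := by
  by_contra! hS
  have same_side : ∀ {x y g}, HasPath S x y g → (x = w ↔ y = w) := by
    intro x y g h
    induction h with
    | edge he => exact ⟨(hS _ he).2, not_imp_not.1 (hS _ he).1⟩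
    | refl x => rfl
    | trans _ _ ihxy ihyz => exact ihxy.trans ihyz
    | symm _ ih => exact ih.symm
  exact hvw ((same_side h).2 rfl)

end HasPath

section Contraction

variable {V W G : Type*} [Group G]

/-- The retraction of `V` onto `V ∖ {w}` that sends `w` to `u`. -/
def retraction [DecidableEq V] {u w : V} (hu : u ≠ w) (x : V) : {x // x ≠ w} :=
  if hx : x = w then ⟨u, hu⟩ else ⟨x, hx⟩

@[simp]
theorem retraction_self [DecidableEq V] {u w : V} (hu : u ≠ w) : retraction hu w = ⟨u, hu⟩ :=
  dif_pos rfl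

@[simp]
theorem retraction_of_ne [DecidableEq V] {u w x : V} (hu : u ≠ w) (hx : x ≠ w) :
    retraction hu x = ⟨x, hx⟩ :=
  dif_neg hx

theorem card_subtype_ne_add_one [Finite V] (w : V) : Nat.card {x // x ≠ w} + 1 = Nat.card V := by
  classical
  rw [← Finite.card_option, Nat.card_congr (Equiv.optionSubtypeNe w)]

theorem hasPath_map_transport_iff {r : V → W} {τ : V → G} {ι : W → V} {e : LabeledEdge V G}
    {S : Multiset (LabeledEdge V G)} (hr : ∀ a, r (ι a) = a) (hτ : ∀ a, τ (ι a) = 1)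
    (he : r e.src = r e.tgt) (he_label : τ e.src * e.label = τ e.tgt)
    (hpath : ∀ x, HasPath (e ::ₘ S) (ι (r x)) x (τ x)) (a b : W) (g : G) :
    HasPath (S.map (LabeledEdge.transport r τ)) a b g ↔ HasPath (e ::ₘ S) (ι a) (ι b) g := by
  constructor
  · refine HasPath.bind ι (.id G) <| forall_mem_map_iff.2 fun f hf ↦ ?_
    exact ((hpath f.src).trans (.edge (mem_cons_of_mem hf))).trans (hpath f.tgt).symm
  · intro h
    have h' := h.transport r τ
    simp only [hr, hτ, one_mul, inv_one, mul_one, map_cons] at h'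
    refine h'.bind id (.id G) fun f hf ↦ ?_
    obtain rfl | hf := mem_cons.1 hf
    · simpa [LabeledEdge.transport, he, he_label] using HasPath.refl (r e.tgt)
    · exact .edge hf

theorem exists_contraction {S : Multiset (LabeledEdge V G)} {v w : V} {g : G} (hvw : v ≠ w)
    (h : HasPath S v w g) :
    ∃ S' : Multiset (LabeledEdge {x // x ≠ w} G), card S' + 1 = card S ∧
      ∀ x y g, HasPath S' x y g ↔ HasPath S x y g := by
  classical
  obtain ⟨e, he, hew⟩ := h.exists_edge_incident hvw
  obtain ⟨T, rfl⟩ := exists_cons_of_mem he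
  have h_edge : HasPath (e ::ₘ T) e.src e.tgt e.label := .edge (mem_cons_self e T)
  obtain ⟨u, c, hu, hc, hr, hτ⟩ : ∃ (u : V) (c : G) (hu : u ≠ w), HasPath (e ::ₘ T) u w c ∧
      retraction hu e.src = retraction hu e.tgt ∧
      (Function.update 1 w c : V → G) e.src * e.label =
        (Function.update 1 w c : V → G) e.tgt := by
    obtain ⟨hsrc, htgt⟩ | ⟨hsrc, htgt⟩ := hew
    · exact ⟨e.src, e.label, hsrc, htgt ▸ h_edge, by simp [hsrc, htgt], by simp [hsrc, htgt]⟩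
    · exact ⟨e.tgt, e.label⁻¹, htgt, hsrc ▸ h_edge.symm, by simp [hsrc, htgt],
        by simp [hsrc, htgt]⟩
  refine ⟨T.map (LabeledEdge.transport (retraction hu) (Function.update 1 w c)), by simp,
    hasPath_map_transport_iff (fun x ↦ retraction_of_ne hu x.2)
      (fun x ↦ Function.update_of_ne x.2 _ _) hr hτ fun x ↦ ?_⟩
  obtain rfl | hx := eq_or_ne x w
  · simpa using hc
  · simpa [hx] using HasPath.refl x

end Contraction

section GeneratesAction

variable {V W X G Γ : Type*} [Group G] [Group Γ] [MulAction Γ X]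

/-- Let `G` act on `X` through `φ : G →* Γ`. The graph `S` generates the pullback along
`p : V → X` of the action groupoid, whose arrows `x ⟶ y` are the `g` with `p x = g • p y`. -/
def GeneratesAction (p : V → X) (φ : G →* Γ) (S : Multiset (LabeledEdge V G)) : Prop :=
  ∀ x y g, HasPath S x y g ↔ p x = φ g • p y

theorem HasPath.eq_smul {p : V → X} {φ : G →* Γ} {S : Multiset (LabeledEdge V G)} {x y : V} {g : G}
    (hS : ∀ e ∈ S, p e.src = φ e.label • p e.tgt) (h : HasPath S x y g) : p x = φ g • p y := by
  induction h with
  | edge he => exact hS _ he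
  | refl x => simp
  | trans _ _ ihxy ihyz => rw [ihxy, ihyz, map_mul, mul_smul]
  | symm _ ih => rw [ih, map_inv, inv_smul_smul]

theorem GeneratesAction.edge_eq {p : V → X} {φ : G →* Γ} {S : Multiset (LabeledEdge V G)}
    (hS : GeneratesAction p φ S) : ∀ e ∈ S, p e.src = φ e.label • p e.tgt :=
  fun e he ↦ (hS e.src e.tgt e.label).1 (.edge he)

theorem GeneratesAction.of_hom {p : V → X} {q : W → X} {φ : G →* Γ} {S : Multiset (LabeledEdge V G)}
    {T : Multiset (LabeledEdge W G)} (hS : GeneratesAction p φ S) (f : V → W)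
    (hqf : ∀ x, q (f x) = p x) (hT : ∀ e ∈ T, q e.src = φ e.label • q e.tgt)
    (hST : ∀ e ∈ S, HasPath T (f e.src) (f e.tgt) e.label)
    (hf : ∀ y, ∃ x g, HasPath T y (f x) g) : GeneratesAction q φ T := by
  intro y y' g
  refine ⟨HasPath.eq_smul hT, fun h ↦ ?_⟩
  obtain ⟨x, a, ha⟩ := hf y
  obtain ⟨x', a', ha'⟩ := hf y'
  have hx : p x = φ (a⁻¹ * g * a') • p x' := by
    rw [map_mul, map_mul, mul_smul, mul_smul, ← hqf x', ← ha'.eq_smul hT, ← h, ← hqf x,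
      ← ha.symm.eq_smul hT]
  simpa [mul_assoc] using
    (ha.trans (((hS x x' _).2 hx).bind f (.id G) hST)).trans ha'.symm

theorem GeneratesAction.map {p : V → X} {q : W → X} {φ : G →* Γ} {S : Multiset (LabeledEdge V G)}
    (hS : GeneratesAction p φ S) (e : V ≃ W) (hpq : ∀ x, q (e x) = p x) :
    GeneratesAction q φ (S.map (LabeledEdge.map e id)) := by
  refine hS.of_hom e hpq (forall_mem_map_iff.2 fun f hf ↦ ?_)
    (fun f hf ↦ .edge (mem_map_of_mem (LabeledEdge.map e id) hf))
    fun y ↦ ⟨e.symm y, 1, by simpa using HasPath.refl y⟩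
  simpa [LabeledEdge.map, hpq] using hS.edge_eq f hf

theorem GeneratesAction.exists_midpoint {p : V → X} {φ : G →* Γ} {x y : V} {a b : G}
    {R : Multiset (LabeledEdge V G)}
    (hS : GeneratesAction p φ (⟨x, y, a * b⟩ ::ₘ R)) :
    ∃ q : Option V → X, (∀ v, q (some v) = p v) ∧
      GeneratesAction q φ
        (⟨some x, none, a⟩ ::ₘ ⟨none, some y, b⟩ ::ₘ R.map (LabeledEdge.map some id)) := by
  set T : Multiset (LabeledEdge (Option V) G) :=
    ⟨some x, none, a⟩ ::ₘ ⟨none, some y, b⟩ ::ₘ R.map (LabeledEdge.map some id) with hT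
  have hfirst : HasPath T (some x) none a := .edge (e := ⟨some x, none, a⟩) (by simp [hT])
  have hsecond : HasPath T none (some y) b := .edge (e := ⟨none, some y, b⟩) (by simp [hT])
  have hxy : p x = φ (a * b) • p y := hS.edge_eq ⟨x, y, a * b⟩ (mem_cons_self _ R)
  refine ⟨fun v ↦ v.elim (φ b • p y) p, fun _ ↦ rfl,
    hS.of_hom some (fun _ ↦ rfl) ?_ ?_ ?_⟩
  · simp only [hT, forall_mem_cons, forall_mem_map_iff]
    exact ⟨by simpa [mul_smul] using hxy, rfl,
      fun e he ↦ hS.edge_eq e (mem_cons_of_mem he)⟩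
  · simp only [forall_mem_cons]
    refine ⟨hfirst.trans hsecond, fun e he ↦ ?_⟩
    exact .edge (mem_cons_of_mem (mem_cons_of_mem (mem_map_of_mem (LabeledEdge.map some id) he)))
  · rintro (_ | v)
    · exact ⟨y, b, hsecond⟩
    · exact ⟨v, 1, .refl _⟩

/-- The least number of edges of a graph on `X` that generates the groupoid of the action of `G` on
`X` through `φ`. It is the junk value `0` if no finite graph does. -/
noncomputable def actionRank (X : Type*) [MulAction Γ X] (φ : G →* Γ) : ℕ :=
  sInf {n | ∃ S : Multiset (LabeledEdge X G), card S = n ∧ GeneratesAction id φ S}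

theorem actionRank_le_card {p : V → X} {φ : G →* Γ} {S : Multiset (LabeledEdge V G)}
    (hp : p.Bijective) (hS : GeneratesAction p φ S) : actionRank X φ ≤ card S :=
  Nat.sInf_le ⟨_, by simp, hS.map (.ofBijective p hp) fun _ ↦ rfl⟩

theorem exists_card_eq_actionRank {φ : G →* Γ}
    (h : ∃ S : Multiset (LabeledEdge X G), GeneratesAction id φ S) :
    ∃ S : Multiset (LabeledEdge X G), card S = actionRank X φ ∧ GeneratesAction id φ S :=
  Nat.sInf_mem (s := {n | ∃ S : Multiset (LabeledEdge X G), card S = n ∧ GeneratesAction id φ S})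
    (let ⟨S, hS⟩ := h; ⟨card S, S, rfl, hS⟩)

end GeneratesAction

section RankFormula

variable {V X G Γ : Type*} [Group G] [Group Γ] [MulAction Γ X] {φ : G →* Γ}

theorem orbit_mk_eq_iff {x y : X} :
    (Quotient.mk'' x : orbitRel.Quotient φ.range X) = Quotient.mk'' y ↔ ∃ g, x = φ g • y := by
  rw [Quotient.eq'', orbitRel_apply]
  simp [mem_orbit_iff, Subgroup.smul_def, eq_comm]

theorem d_comap_stabilizer_congr {x y : X}
    (h : (Quotient.mk'' x : orbitRel.Quotient φ.range X) = Quotient.mk'' y) :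
    d ((stabilizer Γ x).comap φ) = d ((stabilizer Γ y).comap φ) := by
  let := MulAction.compHom X φ
  obtain ⟨g, hg⟩ := orbit_mk_eq_iff.1 h
  exact d_congr (stabilizerEquivStabilizerOfOrbitRel (G := G) ⟨g, hg.symm⟩)

theorem GeneratesAction.d_comap_stabilizer_le [DecidableEq V] {p : V → X}
    {S : Multiset (LabeledEdge V G)} (hS : GeneratesAction p φ S)
    (hloop : ∀ e ∈ S, e.src = e.tgt) (v : V) :
    d ((stabilizer Γ (p v)).comap φ) ≤ card (S.filter (v = LabeledEdge.src ·)) := by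
  rw [← card_map LabeledEdge.label]
  refine d_le_of_closure_eq _ _ <|
    le_antisymm ((Subgroup.closure_le _).2 fun g hg ↦ ?_) fun g hg ↦ ?_
  · obtain ⟨e, he, rfl⟩ := mem_map.1 hg
    obtain ⟨heS, rfl⟩ := mem_filter.1 he
    have h := hS.edge_eq e heS
    rw [← hloop e heS] at h
    exact h.symm
  · exact (((hS v v g).2 (mem_stabilizer_iff.1 hg).symm).mem_closure_labels hloop).2

theorem GeneratesAction.finsum_d_le_card [Finite V] {p : V → X} {S : Multiset (LabeledEdge V G)}
    (hS : GeneratesAction p φ S)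
    (hp : Function.Bijective fun v ↦ (Quotient.mk'' (p v) : orbitRel.Quotient φ.range X)) :
    ∑ᶠ ω : orbitRel.Quotient φ.range X, d ((stabilizer Γ ω.out).comap φ) ≤ card S := by
  classical
  have := Fintype.ofFinite V
  have hloop : ∀ e ∈ S, e.src = e.tgt := fun e he ↦
    hp.1 (orbit_mk_eq_iff.2 ⟨e.label, hS.edge_eq e he⟩)
  calc ∑ᶠ ω : orbitRel.Quotient φ.range X, d ((stabilizer Γ ω.out).comap φ)
      = ∑ᶠ v, d ((stabilizer Γ (p v)).comap φ) :=
        (finsum_eq_of_bijective _ hp fun v ↦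
          d_comap_stabilizer_congr (Quotient.out_eq' _).symm).symm
    _ = ∑ v, d ((stabilizer Γ (p v)).comap φ) := finsum_eq_sum_of_fintype _
    _ ≤ ∑ v, card (S.filter (v = LabeledEdge.src ·)) :=
        Finset.sum_le_sum fun v _ ↦ hS.d_comap_stabilizer_le hloop v
    _ = ∑ v, (S.map LabeledEdge.src).count v := by simp only [count_map]
    _ = card S := by rw [sum_count_eq_card fun v _ ↦ Finset.mem_univ v, card_map]

theorem GeneratesAction.card_add_finsum_d_le [Finite V] {p : V → X}
    {S : Multiset (LabeledEdge V G)} (hS : GeneratesAction p φ S)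
    (hp : Function.Surjective fun v ↦ (Quotient.mk'' (p v) : orbitRel.Quotient φ.range X)) :
    Nat.card V + ∑ᶠ ω : orbitRel.Quotient φ.range X, d ((stabilizer Γ ω.out).comap φ) ≤
      card S + Nat.card (orbitRel.Quotient φ.range X) := by
  induction hn : Nat.card V using Nat.strong_induction_on generalizing V with
  | _ n ih
  subst hn
  by_cases hinj : Function.Injective fun v ↦ (Quotient.mk'' (p v) : orbitRel.Quotient φ.range X)
  · rw [Nat.card_congr (.ofBijective _ ⟨hinj, hp⟩)]
    have := hS.finsum_d_le_card ⟨hinj, hp⟩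
    lia
  · obtain ⟨v, w, hvw_orbit, hvw⟩ : ∃ v w, (Quotient.mk'' (p v) : orbitRel.Quotient φ.range X) =
        Quotient.mk'' (p w) ∧ v ≠ w := by simpa [Function.Injective] using hinj
    obtain ⟨g, hg⟩ := orbit_mk_eq_iff.1 hvw_orbit
    obtain ⟨S', hcard, hS'⟩ := exists_contraction hvw ((hS v w g).2 hg)
    have hV := card_subtype_ne_add_one w
    have := ih (Nat.card {x // x ≠ w}) (by lia) (V := {x // x ≠ w}) (S := S') (p := fun x ↦ p x)
      (fun x y g ↦ (hS' x y g).trans (hS x y g)) (fun ω ↦ ?_) rfl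
    · lia
    obtain ⟨x, rfl⟩ := hp ω
    obtain rfl | hx := eq_or_ne x w
    · exact ⟨⟨v, hvw⟩, hvw_orbit⟩
    · exact ⟨⟨x, hx⟩, rfl⟩

theorem generatesAction_of_star {p : V → X} {S : Multiset (LabeledEdge V G)}
    (hS : ∀ e ∈ S, p e.src = φ e.label • p e.tgt) (r : V → V)
    (hr : ∀ x y g, p x = φ g • p y → r x = r y) (hspoke : ∀ x, ∃ g, HasPath S (r x) x g)
    (hloop : ∀ x g, p (r x) = φ g • p (r x) → HasPath S (r x) (r x) g) :
    GeneratesAction p φ S := by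
  intro x y g
  refine ⟨HasPath.eq_smul hS, fun hxy ↦ ?_⟩
  obtain ⟨a, ha⟩ := hspoke x
  obtain ⟨b, hb⟩ := hspoke y
  rw [← hr x y g hxy] at hb
  have h : HasPath S (r x) (r x) (a * g * b⁻¹) := hloop x _ <| by
    rw [map_mul, map_mul, mul_smul, mul_smul, ← hb.symm.eq_smul hS, ← hxy, ← ha.eq_smul hS]
  simpa [mul_assoc] using (ha.symm.trans h).trans hb

theorem fg_comap_stabilizer [Group.FG G] [Finite X] (φ : G →* Γ) (x : X) :
    Group.FG ((stabilizer Γ x).comap φ) := by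
  let := MulAction.compHom X φ
  have : (stabilizer G x).FiniteIndex :=
    ⟨by rw [index_stabilizer]; exact ((Set.ncard_pos (Set.toFinite _)).2 (nonempty_orbit x)).ne'⟩
  exact (inferInstance : Group.FG (stabilizer G x))

theorem exists_spokes [Finite X] (φ : G →* Γ) :
    ∃ S : Multiset (LabeledEdge X G),
      card S + Nat.card (orbitRel.Quotient φ.range X) = Nat.card X ∧
      (∀ e ∈ S, e.src = φ e.label • e.tgt) ∧
      ∀ x, ∃ g, HasPath S (Quotient.mk'' x : orbitRel.Quotient φ.range X).out x g := by
  classical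
  have := Fintype.ofFinite X
  have := Fintype.ofFinite (orbitRel.Quotient φ.range X)
  let r (x : X) : X := (Quotient.mk'' x : orbitRel.Quotient φ.range X).out
  have hr (x : X) : ∃ g, r x = φ g • x := orbit_mk_eq_iff.1 (Quotient.out_eq' _)
  choose spoke hspoke using hr
  let reps : Finset X := Finset.univ.image (Quotient.out : orbitRel.Quotient φ.range X → X)
  have hreps : reps.card = Nat.card (orbitRel.Quotient φ.range X) := by
    rw [Finset.card_image_of_injective _ Quotient.out_injective, Finset.card_univ,
      Nat.card_eq_fintype_card]
  refine ⟨repsᶜ.val.map fun x ↦ ⟨r x, x, spoke x⟩, ?_, forall_mem_map_iff.2 fun x _ ↦ hspoke x,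
    fun x ↦ ?_⟩
  · rw [← hreps, card_map, Finset.card_val, Finset.card_compl_add_card, Nat.card_eq_fintype_card]
  · by_cases hx : x ∈ reps
    · obtain ⟨ω, -, rfl⟩ := Finset.mem_image.1 hx
      exact ⟨1, by simpa using HasPath.refl ω.out⟩
    · exact ⟨spoke x, .edge (e := ⟨r x, x, spoke x⟩) (mem_map_of_mem _ (Finset.mem_compl.2 hx))⟩

theorem exists_loops [Group.FG G] [Finite X] (φ : G →* Γ) :
    ∃ S : Multiset (LabeledEdge X G),
      card S = ∑ᶠ ω : orbitRel.Quotient φ.range X, d ((stabilizer Γ ω.out).comap φ) ∧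
      (∀ e ∈ S, e.src = φ e.label • e.tgt) ∧
      ∀ (ω : orbitRel.Quotient φ.range X) g, ω.out = φ g • ω.out → HasPath S ω.out ω.out g := by
  have := Fintype.ofFinite (orbitRel.Quotient φ.range X)
  have hfg := fg_comap_stabilizer (X := X) φ
  choose gens hgens_card hgens using fun ω : orbitRel.Quotient φ.range X ↦
    exists_finset_closure_eq_top_card_eq_d ((stabilizer Γ ω.out).comap φ)
  let loop (ω : orbitRel.Quotient φ.range X) (g : (stabilizer Γ ω.out).comap φ) :
      LabeledEdge X G := ⟨ω.out, ω.out, g⟩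
  let S : Multiset (LabeledEdge X G) := ∑ ω, (gens ω).val.map (loop ω)
  refine ⟨S, by simp [S, finsum_eq_sum_of_fintype, hgens_card], fun e he ↦ ?_, fun ω g hg ↦ ?_⟩
  · obtain ⟨ω, -, he⟩ := mem_sum.1 he
    obtain ⟨g, -, rfl⟩ := mem_map.1 he
    exact (mem_stabilizer_iff.1 g.2).symm
  · have hgen : ∀ g ∈ gens ω, HasPath S ω.out ω.out g := fun g hg ↦
      .edge (e := loop ω g) (mem_sum.2 ⟨ω, Finset.mem_univ ω, mem_map_of_mem (loop ω) hg⟩)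
    have hle := (Subgroup.closure_le ((vertexGroup S ω.out).subgroupOf _)).2 hgen
    rw [hgens] at hle
    exact hle (Subgroup.mem_top ⟨g, hg.symm⟩)

theorem exists_generatesAction_card_add [Group.FG G] [Finite X] (φ : G →* Γ) :
    ∃ S : Multiset (LabeledEdge X G), GeneratesAction id φ S ∧
      card S + Nat.card (orbitRel.Quotient φ.range X) =
        Nat.card X + ∑ᶠ ω : orbitRel.Quotient φ.range X, d ((stabilizer Γ ω.out).comap φ) := by
  obtain ⟨spokes, hspokes_card, hspokes, hspoke⟩ := exists_spokes (X := X) φ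
  obtain ⟨loops, hloops_card, hloops, hloop⟩ := exists_loops (X := X) φ
  refine ⟨spokes + loops, generatesAction_of_star ?_
    (fun x ↦ (Quotient.mk'' x : orbitRel.Quotient φ.range X).out) ?_ ?_ ?_, ?_⟩
  · exact fun e he ↦ (mem_add.1 he).elim (hspokes e) (hloops e)
  · exact fun x y g hxy ↦ congrArg Quotient.out (orbit_mk_eq_iff.2 ⟨g, hxy⟩)
  · exact fun x ↦ (hspoke x).imp fun _ h ↦ h.mono (subset_of_le (le_add_right _ _))
  · exact fun x g hg ↦ (hloop _ g hg).mono (subset_of_le (le_add_left _ _))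
  · rw [card_add]
    lia

theorem actionRank_add_card [Group.FG G] [Finite X] (φ : G →* Γ) :
    actionRank X φ + Nat.card (orbitRel.Quotient φ.range X) =
      Nat.card X + ∑ᶠ ω : orbitRel.Quotient φ.range X, d ((stabilizer Γ ω.out).comap φ) := by
  obtain ⟨S, hS, hcard⟩ := exists_generatesAction_card_add (X := X) φ
  obtain ⟨T, hTcard, hT⟩ := exists_card_eq_actionRank ⟨S, hS⟩
  have hle := actionRank_le_card Function.bijective_id hS
  have hge := hT.card_add_finsum_d_le Quotient.mk''_surjective
  lia

end RankFormula

section Amalgam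

variable {V W X A B K Γ : Type*} [Group A] [Group B] [Group K] [Group Γ] [MulAction Γ X]

/-- The union of a graph labelled by `A` and a graph labelled by `B`, with all labels read in `K`
through `i` and `j`. -/
def amalgam (i : A →* K) (j : B →* K) (SA : Multiset (LabeledEdge V A))
    (SB : Multiset (LabeledEdge V B)) : Multiset (LabeledEdge V K) :=
  SA.map (LabeledEdge.map id i) + SB.map (LabeledEdge.map id j)

variable {i : A →* K} {j : B →* K} {SA : Multiset (LabeledEdge V A)}
  {SB : Multiset (LabeledEdge V B)}

theorem amalgam_comm : amalgam i j SA SB = amalgam j i SB SA :=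
  add_comm _ _

theorem amalgam_add_amalgam (SA' : Multiset (LabeledEdge V A)) (SB' : Multiset (LabeledEdge V B)) :
    amalgam i j SA SB + amalgam i j SA' SB' = amalgam i j (SA + SA') (SB + SB') := by
  simp only [amalgam, Multiset.map_add]
  abel

theorem map_amalgam (f : V → W) :
    (amalgam i j SA SB).map (LabeledEdge.map f id) =
      amalgam i j (SA.map (LabeledEdge.map f id)) (SB.map (LabeledEdge.map f id)) := by
  simp [amalgam, LabeledEdge.map, Function.comp_def]

theorem forall_mem_amalgam {P : LabeledEdge V K → Prop} :
    (∀ e ∈ amalgam i j SA SB, P e) ↔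
      (∀ e ∈ SA, P (e.map id i)) ∧ ∀ e ∈ SB, P (e.map id j) := by
  simp [amalgam, or_imp, forall_and]

theorem HasPath.amalgam_left {x y : V} {a : A} (h : HasPath SA x y a) :
    HasPath (amalgam i j SA SB) x y (i a) :=
  (h.map id i).mono (subset_of_le (le_add_right _ _))

theorem HasPath.amalgam_right {x y : V} {b : B} (h : HasPath SB x y b) :
    HasPath (amalgam i j SA SB) x y (j b) :=
  (h.map id j).mono (subset_of_le (le_add_left _ _))

theorem GeneratesAction.exists_fold {φ : K →* Γ} {p : V → X} (hp : p.Surjective)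
    (hS : GeneratesAction p φ (amalgam i j SA SB)) {v w : V} (hvw : v ≠ w)
    (h : HasPath SA v w 1) :
    ∃ (SA' : Multiset (LabeledEdge {x // x ≠ w} A)) (SB' : Multiset (LabeledEdge {x // x ≠ w} B)),
      card SA' + 1 = card SA ∧ card SB' = card SB ∧
      Function.Surjective (fun x : {x // x ≠ w} ↦ p x) ∧
      GeneratesAction (fun x : {x // x ≠ w} ↦ p x) φ (amalgam i j SA' SB') := by
  classical
  obtain ⟨SA', hcard, hSA'⟩ := exists_contraction hvw h
  have hpath (x : V) : HasPath SA (retraction hvw x) x 1 := by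
    obtain rfl | hx := eq_or_ne x w
    · simpa using h
    · simpa [hx] using HasPath.refl x
  have hpr (x : V) : p (retraction hvw x) = p x := by
    simpa using (hS _ _ _).1 (hpath x).amalgam_left
  refine ⟨SA', SB.map (LabeledEdge.map (retraction hvw) id), hcard, card_map _ _,
    fun x ↦ (hp x).imp' (retraction hvw) fun y hy ↦ (hpr y).trans hy,
    hS.of_hom (retraction hvw) hpr (forall_mem_amalgam.2 ⟨fun e he ↦ ?_, ?_⟩)
      (forall_mem_amalgam.2 ⟨fun e he ↦ ?_, fun e he ↦ ?_⟩)
      fun x ↦ ⟨x, 1, by simpa [x.2] using HasPath.refl x⟩⟩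
  · exact (hS _ _ _).1 ((hSA' _ _ _).1 (.edge he)).amalgam_left
  · refine forall_mem_map_iff.2 fun e he ↦ ?_
    simpa [LabeledEdge.map, hpr] using (hS _ _ _).1 (HasPath.edge he).amalgam_right
  · have h := ((hpath e.src).trans (.edge he)).trans (hpath e.tgt).symm
    exact ((hSA' (retraction hvw e.src) (retraction hvw e.tgt) e.label).2
      (by simpa using h)).amalgam_left
  · exact (HasPath.edge (mem_map_of_mem (LabeledEdge.map (retraction hvw) id) he)).amalgam_right

end Amalgam

section Folded

open scoped Pointwise

variable {V A B : Type*} [Group A] [Group B]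

/-- A folded graph in the sense of Stallings: a path with trivial label is closed. -/
def IsFolded (S : Multiset (LabeledEdge V A)) : Prop :=
  ∀ x y, HasPath S x y 1 → x = y

/-- The arrows out of `x` of the groupoid generated by `S`, sorted by target. For folded `S` this
embeds the vertices into a set with an action of the label group. -/
def arrowsFrom (S : Multiset (LabeledEdge V A)) (x : V) : V → Set A :=
  fun y ↦ {g | HasPath S x y g}

theorem smul_arrowsFrom_eq_iff {S : Multiset (LabeledEdge V A)} {x y : V} {a : A} :
    a • arrowsFrom S y = arrowsFrom S x ↔ HasPath S x y a := by
  refine ⟨fun h ↦ ?_, fun h ↦ funext fun z ↦ Set.ext fun g ↦ ?_⟩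
  · have : a ∈ (a • arrowsFrom S y) y := Set.mem_smul_set.2 ⟨1, .refl y, mul_one a⟩
    rwa [h] at this
  · rw [Pi.smul_apply, Set.mem_smul_set_iff_inv_smul_mem]
    exact ⟨fun hg ↦ by simpa [arrowsFrom] using h.trans hg, fun hg ↦ h.symm.trans hg⟩

theorem IsFolded.arrowsFrom_injective {S : Multiset (LabeledEdge V A)} (hS : IsFolded S) :
    Function.Injective (arrowsFrom S) := fun x y h ↦
  hS x y (smul_arrowsFrom_eq_iff.1 ((one_smul A _).trans h.symm))

theorem exists_perm_sum_apply_inl {α β : Type*} {f : V → α} {g : V → β} (hf : f.Injective)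
    (hg : g.Injective) : ∃ σ : Equiv.Perm (α ⊕ β), ∀ x, σ (.inl (f x)) = .inr (g x) := by
  classical
  let e := Equiv.ofInjective (Sum.map f g) (hf.sumMap hg)
  exact ⟨Equiv.Perm.extendDomain (Equiv.sumComm V V) e, fun x ↦
    Equiv.Perm.extendDomain_apply_image _ e (.inl x)⟩

theorem exists_perm_representation {SA : Multiset (LabeledEdge V A)}
    {SB : Multiset (LabeledEdge V B)} (hSA : IsFolded SA) (hSB : IsFolded SB) :
    ∃ (π : Monoid.Coprod A B →* Equiv.Perm ((V → Set A) ⊕ (V → Set B)))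
      (ι : V → (V → Set A) ⊕ (V → Set B)),
      (∀ x y a, ι x = π (inl a) • ι y ↔ HasPath SA x y a) ∧
      ∀ x y b, ι x = π (inr b) • ι y ↔ HasPath SB x y b := by
  obtain ⟨σ, hσ⟩ := exists_perm_sum_apply_inl hSA.arrowsFrom_injective hSB.arrowsFrom_injective
  let πA : A →* Equiv.Perm ((V → Set A) ⊕ (V → Set B)) :=
    (Equiv.Perm.sumCongrHom _ _).comp ((MonoidHom.inl _ _).comp (toPermHom A _))
  let πB : B →* Equiv.Perm ((V → Set A) ⊕ (V → Set B)) :=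
    (Equiv.Perm.sumCongrHom _ _).comp ((MonoidHom.inr _ _).comp (toPermHom B _))
  refine ⟨lift πA ((MulAut.conj σ⁻¹).toMonoidHom.comp πB), fun x ↦ .inl (arrowsFrom SA x),
    fun x y a ↦ ?_, fun x y b ↦ ?_⟩
  · simp [πA, ← smul_arrowsFrom_eq_iff, eq_comm]
  · simp [πB, ← smul_arrowsFrom_eq_iff, Equiv.eq_symm_apply, hσ, eq_comm]

theorem hasPath_amalgam_iff_of_isFolded {SA : Multiset (LabeledEdge V A)}
    {SB : Multiset (LabeledEdge V B)} (hSA : IsFolded SA) (hSB : IsFolded SB) :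
    (∀ x y a, HasPath (amalgam inl inr SA SB) x y (inl a) ↔ HasPath SA x y a) ∧
      ∀ x y b, HasPath (amalgam inl inr SA SB) x y (inr b) ↔ HasPath SB x y b := by
  obtain ⟨π, ι, hA, hB⟩ := exists_perm_representation hSA hSB
  have hι : ∀ e ∈ amalgam inl inr SA SB, ι e.src = π e.label • ι e.tgt :=
    forall_mem_amalgam.2 ⟨fun e he ↦ (hA _ _ _).2 (.edge he), fun e he ↦ (hB _ _ _).2 (.edge he)⟩
  exact ⟨fun x y a ↦ ⟨fun h ↦ (hA x y a).1 (h.eq_smul hι), .amalgam_left⟩,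
    fun x y b ↦ ⟨fun h ↦ (hB x y b).1 (h.eq_smul hι), .amalgam_right⟩⟩

end Folded

section FreeProduct

universe u

variable {V : Type u} {X G₁ G₂ : Type*} [Group G₁] [Group G₂] [MulAction (G₁ ∗ G₂) X]

theorem generatesAction_amalgam {p : V → X} (hp : p.Surjective)
    {S₁ : Multiset (LabeledEdge V G₁)} {S₂ : Multiset (LabeledEdge V G₂)}
    (h₁ : GeneratesAction p (inl : G₁ →* G₁ ∗ G₂) S₁)
    (h₂ : GeneratesAction p (inr : G₂ →* G₁ ∗ G₂) S₂) :
    GeneratesAction p (.id (G₁ ∗ G₂)) (amalgam inl inr S₁ S₂) := by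
  intro x y g
  refine ⟨HasPath.eq_smul (forall_mem_amalgam.2 ⟨h₁.edge_eq, h₂.edge_eq⟩), fun h ↦ ?_⟩
  induction g using Monoid.Coprod.induction_on generalizing x y with
  | inl a => exact ((h₁ x y a).2 h).amalgam_left
  | inr b => exact ((h₂ x y b).2 h).amalgam_right
  | mul a b iha ihb =>
    obtain ⟨z, hz⟩ := hp (b • p y)
    refine (iha x z ?_).trans (ihb z y hz)
    rw [hz, h, map_mul, mul_smul]
    rfl

theorem GeneratesAction.inl_of_isFolded {p : V → X}
    {S₁ : Multiset (LabeledEdge V G₁)} {S₂ : Multiset (LabeledEdge V G₂)}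
    (hS : GeneratesAction p (.id (G₁ ∗ G₂)) (amalgam inl inr S₁ S₂)) (h₁ : IsFolded S₁)
    (h₂ : IsFolded S₂) : GeneratesAction p (inl : G₁ →* G₁ ∗ G₂) S₁ :=
  fun x y a ↦ ((hasPath_amalgam_iff_of_isFolded h₁ h₂).1 x y a).symm.trans (hS x y (inl a))

theorem GeneratesAction.inr_of_isFolded {p : V → X}
    {S₁ : Multiset (LabeledEdge V G₁)} {S₂ : Multiset (LabeledEdge V G₂)}
    (hS : GeneratesAction p (.id (G₁ ∗ G₂)) (amalgam inl inr S₁ S₂)) (h₁ : IsFolded S₁)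
    (h₂ : IsFolded S₂) : GeneratesAction p (inr : G₂ →* G₁ ∗ G₂) S₂ :=
  fun x y b ↦ ((hasPath_amalgam_iff_of_isFolded h₁ h₂).2 x y b).symm.trans (hS x y (inr b))

theorem actionRank_add_card_le_of_generatesAction_amalgam [Finite V] {p : V → X}
    (hp : p.Surjective) {S₁ : Multiset (LabeledEdge V G₁)} {S₂ : Multiset (LabeledEdge V G₂)}
    (hS : GeneratesAction p (.id (G₁ ∗ G₂)) (amalgam inl inr S₁ S₂)) :
    actionRank X (inl : G₁ →* G₁ ∗ G₂) +
        actionRank X (inr : G₂ →* G₁ ∗ G₂) + Nat.card V ≤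
      card S₁ + card S₂ + Nat.card X := by
  induction hn : Nat.card V using Nat.strong_induction_on generalizing V with
  | _ n ih
  subst hn
  by_cases h₁ : IsFolded S₁
  · by_cases h₂ : IsFolded S₂
    · have hS₁ := hS.inl_of_isFolded h₁ h₂
      have hpinj : p.Injective := fun x y hxy ↦ h₁ x y ((hS₁ x y 1).2 (by simpa using hxy))
      have hle₁ := actionRank_le_card ⟨hpinj, hp⟩ hS₁
      have hle₂ := actionRank_le_card ⟨hpinj, hp⟩ (hS.inr_of_isFolded h₁ h₂)
      rw [Nat.card_congr (.ofBijective p ⟨hpinj, hp⟩)]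
      lia
    · obtain ⟨v, w, h, hvw⟩ : ∃ v w, HasPath S₂ v w 1 ∧ v ≠ w := by
        simpa [IsFolded] using h₂
      rw [amalgam_comm] at hS
      obtain ⟨T₂, T₁, hT₂, hT₁, hq, hT⟩ := hS.exists_fold hp hvw h
      rw [amalgam_comm] at hT
      have hV := card_subtype_ne_add_one w
      have := ih _ (by lia) hq hT rfl
      lia
  · obtain ⟨v, w, h, hvw⟩ : ∃ v w, HasPath S₁ v w 1 ∧ v ≠ w := by
      simpa [IsFolded] using h₁
    obtain ⟨T₁, T₂, hT₁, hT₂, hq, hT⟩ := hS.exists_fold hp hvw h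
    have hV := card_subtype_ne_add_one w
    have := ih _ (by lia) hq hT rfl
    lia

/-- Over some finite vertex set `W` mapped to from `V`, the graph `R` together with further edges
labelled by `G₁` or `G₂` generates the action groupoid, and `n` is the excess of further edges over
added vertices. This is how the subdivision of `n` edges is recorded: an edge whose label is a
product of `k` elements of `G₁` and `G₂` becomes `k` edges, at the cost of `k - 1` vertices. -/
def HasSubdivision (p : V → X) (R : Multiset (LabeledEdge V (G₁ ∗ G₂))) (n : ℕ) : Prop :=
  ∃ (W : Type u) (_ : Finite W) (f : V → W) (q : W → X) (S₁ : Multiset (LabeledEdge W G₁))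
    (S₂ : Multiset (LabeledEdge W G₂)), (∀ x, q (f x) = p x) ∧
    GeneratesAction q (.id (G₁ ∗ G₂)) (R.map (LabeledEdge.map f id) + amalgam inl inr S₁ S₂) ∧
    card S₁ + card S₂ + Nat.card V = n + Nat.card W

theorem HasSubdivision.of_amalgam [Finite V] {p : V → X}
    {R : Multiset (LabeledEdge V (G₁ ∗ G₂))} {S₁ : Multiset (LabeledEdge V G₁)}
    {S₂ : Multiset (LabeledEdge V G₂)}
    (hS : GeneratesAction p (.id (G₁ ∗ G₂)) (R + amalgam inl inr S₁ S₂)) :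
    HasSubdivision p R (card S₁ + card S₂) :=
  ⟨V, ‹_›, id, p, S₁, S₂, fun _ ↦ rfl, by simpa using hS, rfl⟩

theorem HasSubdivision.comp {W : Type u} {p : V → X} {q : W → X} {f : V → W}
    {R : Multiset (LabeledEdge V (G₁ ∗ G₂))} {S₁ : Multiset (LabeledEdge W G₁)}
    {S₂ : Multiset (LabeledEdge W G₂)} {m n : ℕ} (hqf : ∀ x, q (f x) = p x)
    (hR : HasSubdivision q (R.map (LabeledEdge.map f id) + amalgam inl inr S₁ S₂) m)
    (hcard : card S₁ + card S₂ + Nat.card V + m = n + Nat.card W) :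
    HasSubdivision p R n := by
  obtain ⟨W', hW', f', q', T₁, T₂, hqf', hT, hcard'⟩ := hR
  refine ⟨W', hW', f' ∘ f, q', S₁.map (LabeledEdge.map f' id) + T₁,
    S₂.map (LabeledEdge.map f' id) + T₂, fun x ↦ (hqf' _).trans (hqf x), ?_, ?_⟩
  · rw [Multiset.map_add, map_amalgam, add_assoc, amalgam_add_amalgam, map_map] at hT
    exact hT
  · simp only [card_add, card_map]
    lia

theorem HasSubdivision.of_cons [Finite V] {p : V → X} {x y : V} {g : G₁ ∗ G₂}
    {R : Multiset (LabeledEdge V (G₁ ∗ G₂))}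
    (hS : GeneratesAction p (.id (G₁ ∗ G₂)) (⟨x, y, g⟩ ::ₘ R)) : HasSubdivision p R 1 := by
  induction g using Monoid.Coprod.induction_on generalizing V with
  | inl a =>
    refine of_amalgam (S₁ := {⟨x, y, a⟩}) (S₂ := 0) ?_
    simpa [amalgam, LabeledEdge.map, add_comm R] using hS
  | inr b =>
    refine of_amalgam (S₁ := 0) (S₂ := {⟨x, y, b⟩}) ?_
    simpa [amalgam, LabeledEdge.map, add_comm R] using hS
  | mul a b iha ihb =>
    obtain ⟨q, hq, hT⟩ := hS.exists_midpoint
    obtain ⟨W, hW, f, q', S₁, S₂, hqf, hS', hcard⟩ := iha hT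
    rw [map_cons, cons_add, map_map] at hS'
    refine comp (f := f ∘ some) (fun v ↦ (hqf _).trans (hq v)) (ihb hS') ?_
    rw [Finite.card_option] at hcard
    lia

theorem HasSubdivision.of_add [Finite V] {p : V → X} {T R : Multiset (LabeledEdge V (G₁ ∗ G₂))}
    (hS : GeneratesAction p (.id (G₁ ∗ G₂)) (T + R)) : HasSubdivision p R (card T) := by
  induction hT : card T generalizing V T with
  | zero =>
    obtain rfl := card_eq_zero.1 hT
    exact of_amalgam (S₁ := 0) (S₂ := 0) (by simpa [amalgam, add_comm R] using hS)
  | succ n ih =>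
    obtain ⟨e, T, rfl, rfl⟩ := card_eq_succ_iff.1 hT
    rw [cons_add] at hS
    obtain ⟨W, hW, f, q, S₁, S₂, hqf, hS', hcard⟩ := of_cons hS
    rw [Multiset.map_add, add_assoc] at hS'
    exact comp hqf (ih hS' (card_map _ _)) (by lia)

variable (X G₁ G₂)

theorem actionRank_id_eq_add [Group.FG G₁] [Group.FG G₂] [Finite X] :
    actionRank X (.id (G₁ ∗ G₂)) =
      actionRank X (inl : G₁ →* G₁ ∗ G₂) + actionRank X (inr : G₂ →* G₁ ∗ G₂) := by
  obtain ⟨S₁, hS₁, -⟩ := exists_generatesAction_card_add (X := X) (inl : G₁ →* G₁ ∗ G₂)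
  obtain ⟨S₂, hS₂, -⟩ := exists_generatesAction_card_add (X := X) (inr : G₂ →* G₁ ∗ G₂)
  obtain ⟨T₁, hT₁_card, hT₁⟩ := exists_card_eq_actionRank ⟨S₁, hS₁⟩
  obtain ⟨T₂, hT₂_card, hT₂⟩ := exists_card_eq_actionRank ⟨S₂, hS₂⟩
  have hT := generatesAction_amalgam Function.surjective_id hT₁ hT₂
  obtain ⟨S, hS_card, hS⟩ := exists_card_eq_actionRank ⟨_, hT⟩
  obtain ⟨W, hW, f, q, U₁, U₂, hqf, hU, hU_card⟩ :=
    HasSubdivision.of_add (R := 0) (by simpa using hS)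
  have hq : q.Surjective := .of_comp (g := f) fun x ↦ ⟨x, hqf x⟩
  have hge := actionRank_add_card_le_of_generatesAction_amalgam hq (by simpa using hU)
  have hle := actionRank_le_card Function.bijective_id hT
  simp only [amalgam, card_add, card_map] at hle
  lia

end FreeProduct

section FiniteIndex

variable {G Γ X : Type*} [Group G] [Group Γ] [MulAction Γ X]

theorem actionRank_eq_card_add_finsum [Group.FG G] [Finite X] (φ : G →* Γ) :
    (actionRank X φ : ℝ) = Nat.card X +
      ∑ᶠ ω : orbitRel.Quotient φ.range X, ((d ((stabilizer Γ ω.out).comap φ) : ℝ) - 1) := by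
  have := Fintype.ofFinite (orbitRel.Quotient φ.range X)
  have h := actionRank_add_card (X := X) φ
  rw [finsum_eq_sum_of_fintype, Nat.card_eq_fintype_card (α := orbitRel.Quotient φ.range X)] at h
  rw [finsum_eq_sum_of_fintype, Finset.sum_sub_distrib, Finset.sum_const, nsmul_one,
    Finset.card_univ]
  have h' := congrArg (Nat.cast : ℕ → ℝ) h
  push_cast at h'
  linarith

theorem actionRank_id_add_one [IsPretransitive Γ X] [Group.FG Γ] [Finite X] (x : X) :
    actionRank X (.id Γ) + 1 = Nat.card X + d (stabilizer Γ x) := by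
  have horbit (y z : X) :
      (Quotient.mk'' y : orbitRel.Quotient (MonoidHom.id Γ).range X) = Quotient.mk'' z :=
    orbit_mk_eq_iff.2 ((exists_smul_eq Γ z y).imp fun _ ↦ Eq.symm)
  let : Unique (orbitRel.Quotient (MonoidHom.id Γ).range X) :=
    ⟨⟨Quotient.mk'' x⟩, fun ω ↦ ω.inductionOn' (horbit · x)⟩
  have h := actionRank_add_card (X := X) (.id Γ)
  rwa [Nat.card_unique, finsum_unique, d_comap_stabilizer_congr (horbit _ x),
    Subgroup.comap_id] at h

theorem stabilizer_quotient_of_normal (N : Subgroup Γ) [N.Normal] (x : Γ ⧸ N) :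
    stabilizer Γ x = N := by
  obtain ⟨a, rfl⟩ := QuotientGroup.mk_surjective x
  ext g
  rw [mem_stabilizer_iff]
  simp

theorem card_orbits_mul_index_comap (N : Subgroup Γ) [N.Normal] [N.FiniteIndex] (i : G →* Γ) :
    Nat.card (orbitRel.Quotient i.range (Γ ⧸ N)) * (N.comap i).index = N.index := by
  have := Fintype.ofFinite (orbitRel.Quotient i.range (Γ ⧸ N))
  have horbit (x : Γ ⧸ N) : Nat.card (orbit i.range x) = (N.comap i).index := by
    have hstab : stabilizer i.range x = N.subgroupOf i.range :=
      congrArg (Subgroup.subgroupOf · i.range) (stabilizer_quotient_of_normal N x)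
    rw [Nat.card_coe_set_eq, ← index_stabilizer, hstab, Subgroup.index_comap, Subgroup.relIndex]
  rw [N.index_eq_card, Nat.card_congr (selfEquivSigmaOrbits i.range (Γ ⧸ N)), Nat.card_sigma,
    Finset.sum_congr rfl fun ω _ ↦ horbit ω.out, Finset.sum_const, Finset.card_univ,
    Nat.card_eq_fintype_card, smul_eq_mul]

theorem finsum_d_sub_one_div_index_of_normal (N : Subgroup Γ) [N.Normal] [N.FiniteIndex]
    (i : G →* Γ) :
    (∑ᶠ ω : orbitRel.Quotient i.range (Γ ⧸ N), ((d ((stabilizer Γ ω.out).comap i) : ℝ) - 1)) /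
      N.index = ((d (N.comap i) : ℝ) - 1) / (N.comap i).index := by
  have := Fintype.ofFinite (orbitRel.Quotient i.range (Γ ⧸ N))
  have hcard : (Nat.card (orbitRel.Quotient i.range (Γ ⧸ N)) : ℝ) * (N.comap i).index =
      N.index := by
    exact_mod_cast card_orbits_mul_index_comap N i
  have hN : (N.index : ℝ) ≠ 0 := Nat.cast_ne_zero.2 Subgroup.FiniteIndex.index_ne_zero
  have hd (x : Γ ⧸ N) : d ((stabilizer Γ x).comap i) = d (N.comap i) := by
    rw [stabilizer_quotient_of_normal]
  simp only [hd, finsum_eq_sum_of_fintype, Finset.sum_const,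
    Finset.card_univ, nsmul_eq_mul, ← Nat.card_eq_fintype_card]
  rw [← hcard] at hN ⊢
  rw [mul_div_mul_left _ _ (left_ne_zero_of_mul hN)]

end FiniteIndex

theorem fg_coprod (G₁ G₂ : Type*) [Group G₁] [Group G₂] [Group.FG G₁] [Group.FG G₂] :
    Group.FG (G₁ ∗ G₂) := by
  have h := ((Group.fg_iff_subgroup_fg _).1 (Group.fg_range (inl : G₁ →* G₁ ∗ G₂))).sup
    ((Group.fg_iff_subgroup_fg _).1 (Group.fg_range (inr : G₂ →* G₁ ∗ G₂)))
  rw [range_inl_sup_range_inr] at h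
  exact ⟨h⟩

theorem d_stabilizer_sub_one_eq {G₁ G₂ X : Type*} [Group G₁] [Group G₂] [Group.FG G₁]
    [Group.FG G₂] [MulAction (G₁ ∗ G₂) X] [IsPretransitive (G₁ ∗ G₂) X] [Finite X] (x : X) :
    (d (stabilizer (G₁ ∗ G₂) x) : ℝ) - 1 =
      ∑ᶠ ω : orbitRel.Quotient (inl : G₁ →* G₁ ∗ G₂).range X,
        ((d ((stabilizer (G₁ ∗ G₂) ω.out).comap (inl : G₁ →* G₁ ∗ G₂)) : ℝ) - 1) +
      ∑ᶠ ω : orbitRel.Quotient (inr : G₂ →* G₁ ∗ G₂).range X,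
        ((d ((stabilizer (G₁ ∗ G₂) ω.out).comap (inr : G₂ →* G₁ ∗ G₂)) : ℝ) - 1) +
      Nat.card X := by
  have hΓ := fg_coprod G₁ G₂
  have hid := congrArg (Nat.cast : ℕ → ℝ) (actionRank_id_add_one (Γ := G₁ ∗ G₂) x)
  rw [actionRank_id_eq_add] at hid
  push_cast at hid
  rw [actionRank_eq_card_add_finsum, actionRank_eq_card_add_finsum] at hid
  linarith

/-- The orbits of `Gⱼ` on `(G₁ ∗ G₂) ⧸ N` are the double cosets `Gⱼ g N`, and the stabilizer of a
point of such an orbit is a conjugate of `N`. Hence the sums run over the factors other than the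
free one in the Kurosh decomposition of `N`. -/
theorem rank_of_normal_in_free_product_general {G₁ G₂ : Type*} [Group G₁] [Group G₂]
    [Group.FG G₁] [Group.FG G₂] (N : Subgroup (Monoid.Coprod G₁ G₂)) [N.FiniteIndex] :
    ((d N : ℝ) - 1) / N.index =
      (∑ᶠ ω : orbitRel.Quotient (inl : G₁ →* G₁ ∗ G₂).range ((G₁ ∗ G₂) ⧸ N),
        ((d ((stabilizer (G₁ ∗ G₂) ω.out).comap (inl : G₁ →* G₁ ∗ G₂)) : ℝ) - 1)) / N.index +
      (∑ᶠ ω : orbitRel.Quotient (inr : G₂ →* G₁ ∗ G₂).range ((G₁ ∗ G₂) ⧸ N),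
        ((d ((stabilizer (G₁ ∗ G₂) ω.out).comap (inr : G₂ →* G₁ ∗ G₂)) : ℝ) - 1)) / N.index +
      1 := by
  have hN : (N.index : ℝ) ≠ 0 := Nat.cast_ne_zero.2 Subgroup.FiniteIndex.index_ne_zero
  have h := d_stabilizer_sub_one_eq (G₁ := G₁) (G₂ := G₂) ((1 : G₁ ∗ G₂) : (G₁ ∗ G₂) ⧸ N)
  rw [stabilizer_quotient, ← N.index_eq_card] at h
  rw [← add_div, div_add_one hN, div_left_inj' hN]
  exact h

open Monoid.Coprod in
/-- For a normal subgroup `N` of finite index `n` in the free product `G₁ ∗ G₂` of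
finitely generated groups, with `Nⱼ = N ∩ Gⱼ` of index `kⱼ` in `Gⱼ`, one has
`(d(N)-1)/n = (d(N₁)-1)/k₁ + (d(N₂)-1)/k₂ + 1`. -/
theorem rank_of_normal_in_free_product {G₁ G₂ : Type*} [Group G₁] [Group G₂]
    [Group.FG G₁] [Group.FG G₂]
    (N : Subgroup (Monoid.Coprod G₁ G₂)) (hNnorm : N.Normal) (hNfi : N.FiniteIndex)
    (n : ℕ) (hn : N.index = n)
    (k₁ k₂ : ℕ) (hk₁ : (N.comap (inl : G₁ →* Monoid.Coprod G₁ G₂)).index = k₁)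
    (hk₂ : (N.comap (inr : G₂ →* Monoid.Coprod G₁ G₂)).index = k₂) :
    ((d N : ℝ) - 1) / n =
      ((d (N.comap (inl : G₁ →* Monoid.Coprod G₁ G₂)) : ℝ) - 1) / k₁ +
      ((d (N.comap (inr : G₂ →* Monoid.Coprod G₁ G₂)) : ℝ) - 1) / k₂ + 1 := by
  subst hn hk₁ hk₂
  rw [rank_of_normal_in_free_product_general N, finsum_d_sub_one_div_index_of_normal N inl,
    finsum_d_sub_one_div_index_of_normal N inr]
end
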